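/- Under the stated optimal-stopping family setting, the following two claims hold. (i) For every d ∈ 𝔇 there exists a unique function Q_d : 𝕏_d → ℝ which is 𝒳_d/ℬ(ℝ)-measurable and satisfies for all x ∈ 𝕏_d that sup_{y∈𝕏_d} |Q_d(y)| < ∞ and Q_d(x) = g_d(x) + δ_d E[max{G_d(X_d^{0,x}), Q_d(X_d^{0,x})}]. (ii) There exist N : (0,1] → ℕ and c ∈ ℝ such that for all d ∈ 𝔇 and ε ∈ (0,1] it holds that 𝔠_{N_ε, d} ≤ c ℜ_d ε^{−c} and sup_{x∈𝕏_d} (E[|Q_d(x) − Q_{N_ε, d}^0(x)|²])^{1/2} ≤ ε. -/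

import Mathlib

/-!
Fix one problem of the family. The operator `u ↦ g + δ E[max (G(X⁰)) (u(X⁰))]` preserves
measurability and is a `δ`-contraction in the supremum norm, because
`|max a b - max a c| ≤ |b - c|`. This gives (i) by Picard iteration (`MLFP.exists_unique_bellman`),
with the bound `|q| ≤ K / (1 - s)`, which does not depend on the problem.

For (ii), write `Q_n` as `g` plus averages of summands indexed by a level `l` and a sample number
`i`. Three facts about the tree of indices are used. Each `Q_n^θ` is measurable with respect to the
σ-algebras attached to strict extensions of `θ`, so distinct samples are independent and the state
`X^{(θ,l,i)}` is independent of the approximations evaluated at it (which allows conditioning on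
that state: the freezing lemmas). The law of `Q_n^θ(x)` does not depend on `θ`
(`MLFP.IsScheme.identDistrib_Q`). Hence the expectations of the summands telescope, and the bias of
`Q_n` is `δ` times a one-step error at level `n - 1`. With `e_n` the supremum over `θ` and `x` of
the `L²` error, `r = M ^ (-1/2)`, and up to the treatment of `l = 0`, bias and variance add up to
`e_n ≤ δ e_{n-1} + ∑_{l<n} δ r^{n-l} (e_l + e_{l-1})`.
If `r (1 + s) < 1 - s`, which the hypothesis on `M` implies, then some `ρ < 1` makes `A ρ^n` a
supersolution of this recursion (`MLFP.exists_rate`, `MLFP.error_recursion_le`), so `e_n ≤ A ρ^n`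
(`MLFP.IsScheme.eLpNorm_error_le`), with `A` and `ρ` common to the whole family. The cost is at
most `R (4 M)^n` (`MLFP.cost_le`), so taking `N ε` to be the least `n` with `A ρ^n ≤ ε` makes it
polynomial in `1 / ε` (`MLFP.exists_level`).
-/

open MeasureTheory

namespace MLFP
open ProbabilityTheory
open scoped ENNReal

/-! ### Conditioning on an independent state, and sums of independent variables -/

/-- Freezing for a pair of independent variables. Stating it with a separate target space for `U`
lets `lintegral_freeze` take `U` to be the identity into a sub-σ-algebra. -/
lemma lintegral_freeze_aux {Ω Ω' 𝕏 : Type*} [MeasurableSpace Ω] [MeasurableSpace Ω']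
    [MeasurableSpace 𝕏] {μ : Measure Ω} [IsProbabilityMeasure μ] {Z : Ω → 𝕏} {U : Ω → Ω'}
    (hZ : Measurable Z) (hU : Measurable U) (hind : IndepFun Z U μ)
    {H : 𝕏 × Ω' → ℝ≥0∞} (hH : Measurable H) :
    ∫⁻ ω, H (Z ω, U ω) ∂μ = ∫⁻ z, ∫⁻ ω, H (z, U ω) ∂μ ∂(μ.map Z) := by
  have h1 := (indepFun_iff_map_prod_eq_prod_map_map hZ.aemeasurable hU.aemeasurable).1 hind
  rw [← lintegral_map (f := H) hH (hZ.prodMk hU), h1, lintegral_prod _ hH.aemeasurable]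
  refine lintegral_congr fun z => ?_
  rw [lintegral_map (f := fun w => H (z, w)) (hH.comp measurable_prodMk_left) hU]

/-- If `Z` is independent of the σ-algebra `m₂` for which the random field `H` is jointly
measurable, then `E[H(Z)]` is computed by freezing `Z` and integrating over its law. -/
lemma lintegral_freeze {Ω 𝕏 : Type*} {m₁ m₂ mΩ : MeasurableSpace Ω} [m𝕏 : MeasurableSpace 𝕏]
    {μ : Measure Ω} [IsProbabilityMeasure μ] (h₁ : m₁ ≤ mΩ)
    (h₂ : m₂ ≤ mΩ) (hind : Indep m₁ m₂ μ) {Z : Ω → 𝕏} (hZ : Measurable[m₁] Z)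
    {H : 𝕏 × Ω → ℝ≥0∞} (hH : Measurable[m𝕏.prod m₂] H) :
    ∫⁻ ω, H (Z ω, ω) ∂μ = ∫⁻ z, ∫⁻ ω, H (z, ω) ∂μ ∂(μ.map Z) := by
  refine @lintegral_freeze_aux Ω Ω 𝕏 mΩ m₂ m𝕏 μ _ Z id (hZ.mono h₁ le_rfl)
    (measurable_id'' h₂) ?_ H hH
  refine (@IndepFun_iff_Indep Ω 𝕏 Ω mΩ m𝕏 m₂ Z id μ).2 ?_
  rw [MeasurableSpace.comap_id]
  exact indep_of_indep_of_le_left hind hZ.comap_le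

/-- The law of a random field evaluated at an independent point is determined by the law of the
point and the one-dimensional marginals of the field. -/
lemma identDistrib_freeze {Ω 𝕏 : Type*} {m₁ m₂ m₁' m₂' mΩ : MeasurableSpace Ω}
    [m𝕏 : MeasurableSpace 𝕏]
    {μ : Measure Ω} [IsProbabilityMeasure μ] (h₁ : m₁ ≤ mΩ)
    (h₂ : m₂ ≤ mΩ) (hind : Indep m₁ m₂ μ) (h₁' : m₁' ≤ mΩ)
    (h₂' : m₂' ≤ mΩ) (hind' : Indep m₁' m₂' μ)
    {Z Z' : Ω → 𝕏} (hZ : Measurable[m₁] Z) (hZ' : Measurable[m₁'] Z')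
    {H H' : 𝕏 → Ω → ℝ} (hH : Measurable[m𝕏.prod m₂] fun p : 𝕏 × Ω => H p.1 p.2)
    (hH' : Measurable[m𝕏.prod m₂'] fun p : 𝕏 × Ω => H' p.1 p.2)
    (hZZ : μ.map Z = μ.map Z') (hHH : ∀ z, IdentDistrib (H z) (H' z) μ μ) :
    IdentDistrib (fun ω => H (Z ω) ω) (fun ω => H' (Z' ω) ω) μ μ := by
  have mZ : Measurable Z := hZ.mono h₁ le_rfl
  have mZ' : Measurable Z' := hZ'.mono h₁' le_rfl
  have mH : Measurable fun p : 𝕏 × Ω => H p.1 p.2 :=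
    hH.mono (sup_le_sup le_rfl (MeasurableSpace.comap_mono h₂)) le_rfl
  have mH' : Measurable fun p : 𝕏 × Ω => H' p.1 p.2 :=
    hH'.mono (sup_le_sup le_rfl (MeasurableSpace.comap_mono h₂')) le_rfl
  have m1 : Measurable fun ω => H (Z ω) ω := mH.comp (mZ.prodMk measurable_id)
  have m2 : Measurable fun ω => H' (Z' ω) ω := mH'.comp (mZ'.prodMk measurable_id)
  refine ⟨m1.aemeasurable, m2.aemeasurable, Measure.ext fun s hs => ?_⟩
  have hf : Measurable (s.indicator (fun _ => (1 : ℝ≥0∞))) := measurable_const.indicator hs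
  rw [← lintegral_indicator_one hs, ← lintegral_indicator_one hs]
  change ∫⁻ a, s.indicator (fun _ => (1 : ℝ≥0∞)) a ∂_ = ∫⁻ a, s.indicator (fun _ => (1 : ℝ≥0∞)) a ∂_
  rw [lintegral_map hf m1, lintegral_map hf m2]
  rw [lintegral_freeze h₁ h₂ hind hZ (H := fun p => s.indicator (fun _ => 1) (H p.1 p.2))
    (hf.comp hH), lintegral_freeze h₁' h₂' hind' hZ'
      (H := fun p => s.indicator (fun _ => 1) (H' p.1 p.2)) (hf.comp hH'), hZZ]
  refine lintegral_congr fun z => ?_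
  exact ((hHH z).comp hf).lintegral_eq

lemma eLpNorm_two_le_iff {Ω : Type*} [MeasurableSpace Ω] {μ : Measure Ω} {f : Ω → ℝ} {b : ℝ≥0∞} :
    eLpNorm f 2 μ ≤ b ↔ ∫⁻ ω, ‖f ω‖ₑ ^ 2 ∂μ ≤ b ^ 2 := by
  have h := eLpNorm_nnreal_pow_eq_lintegral (μ := μ) (f := f) (p := 2) (by norm_num)
  have h2 : eLpNorm f 2 μ ^ 2 = ∫⁻ ω, ‖f ω‖ₑ ^ 2 ∂μ := by
    simpa using h
  rw [← h2]
  exact (ENNReal.pow_le_pow_left_iff (by norm_num)).symm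

/-- A bound on the `L²` norm that is uniform in the space variable survives the insertion of an
independent random point. -/
lemma eLpNorm_freeze {Ω 𝕏 : Type*} {m₁ m₂ mΩ : MeasurableSpace Ω} [m𝕏 : MeasurableSpace 𝕏]
    {μ : Measure Ω} [IsProbabilityMeasure μ] (h₁ : m₁ ≤ mΩ)
    (h₂ : m₂ ≤ mΩ) (hind : Indep m₁ m₂ μ) {Z : Ω → 𝕏} (hZ : Measurable[m₁] Z)
    {H : 𝕏 → Ω → ℝ} (hH : Measurable[m𝕏.prod m₂] fun p : 𝕏 × Ω => H p.1 p.2) {b : ℝ≥0∞}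
    (hb : ∀ z, eLpNorm (H z) 2 μ ≤ b) :
    eLpNorm (fun ω => H (Z ω) ω) 2 μ ≤ b := by
  rw [eLpNorm_two_le_iff]
  rw [lintegral_freeze h₁ h₂ hind hZ (H := fun p => ‖H p.1 p.2‖ₑ ^ 2)
    ((measurable_enorm.pow_const 2).comp hH)]
  have : IsProbabilityMeasure (μ.map Z) :=
    Measure.isProbabilityMeasure_map (hZ.mono h₁ le_rfl).aemeasurable
  calc _ ≤ ∫⁻ z, b ^ 2 ∂(μ.map Z) := lintegral_mono fun z => eLpNorm_two_le_iff.1 (hb z)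
    _ = b ^ 2 := by simp

lemma eLpNorm_two_eq_sqrt {Ω : Type*} [MeasurableSpace Ω] {μ : Measure Ω} {f : Ω → ℝ}
    (hf : MemLp f 2 μ) : eLpNorm f 2 μ = ENNReal.ofReal (√(∫ ω, f ω ^ 2 ∂μ)) := by
  rw [hf.eLpNorm_eq_integral_rpow_norm (by norm_num) (by norm_num)]
  simp [Real.sqrt_eq_rpow]

/-- The centred sum of `m` pairwise independent variables of `L²` norm at most `b` has `L²` norm at
most `√m * b`, since variances add up. -/
lemma eLpNorm_sum_sub_integral_le {Ω : Type*} [MeasurableSpace Ω] {μ : Measure Ω}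
    [IsProbabilityMeasure μ] {m : ℕ} {T : ℕ → Ω → ℝ} (hT : ∀ i, MemLp (T i) 2 μ)
    (hind : Pairwise fun i j => IndepFun (T i) (T j) μ) {b : ℝ} (hb : 0 ≤ b)
    (hTb : ∀ i, eLpNorm (T i) 2 μ ≤ ENNReal.ofReal b) :
    eLpNorm (fun ω => ∑ i ∈ Finset.range m, (T i ω - ∫ ω', T i ω' ∂μ)) 2 μ
      ≤ ENNReal.ofReal (√m * b) := by
  have hS : MemLp (∑ i ∈ Finset.range m, T i) 2 μ := memLp_finsetSum' _ fun i _ => hT i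
  have hint : ∫ ω, (∑ i ∈ Finset.range m, T i) ω ∂μ = ∑ i ∈ Finset.range m, ∫ ω, T i ω ∂μ := by
    simp only [Finset.sum_apply]
    exact integral_finsetSum _ fun i _ => (hT i).integrable (by norm_num)
  have heq : (fun ω => ∑ i ∈ Finset.range m, (T i ω - ∫ ω', T i ω' ∂μ))
      = fun ω => (∑ i ∈ Finset.range m, T i) ω - ∫ ω, (∑ i ∈ Finset.range m, T i) ω ∂μ := by
    ext ω
    rw [hint, Finset.sum_sub_distrib, Finset.sum_apply]
  rw [heq, eLpNorm_two_eq_sqrt (f := fun ω => (∑ i ∈ Finset.range m, T i) ω - _)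
    (hS.sub (memLp_const _))]
  rw [← variance_eq_integral hS.aestronglyMeasurable.aemeasurable,
    IndepFun.variance_sum (fun i _ => hT i) (fun i _ j _ hij => hind hij)]
  refine ENNReal.ofReal_le_ofReal ?_
  have hv : ∀ i, Var[T i; μ] ≤ b ^ 2 := fun i => by
    refine (variance_le_expectation_sq (hT i).aestronglyMeasurable).trans ?_
    have h := hTb i
    rw [eLpNorm_two_eq_sqrt (hT i), ENNReal.ofReal_le_ofReal_iff hb] at h
    simpa using (Real.sqrt_le_left hb).1 h
  calc √(∑ i ∈ Finset.range m, Var[T i; μ]) ≤ √(∑ i ∈ Finset.range m, b ^ 2) :=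
        Real.sqrt_le_sqrt (Finset.sum_le_sum fun i _ => hv i)
    _ = √m * b := by
      rw [Finset.sum_const, Finset.card_range, nsmul_eq_mul, Real.sqrt_mul (by positivity),
        Real.sqrt_sq hb]

/-- The law of a finite sum of variables living on disjoint blocks of an independent family of
σ-algebras depends only on the laws of the terms. -/
lemma identDistrib_sum {Ω ι κ : Type*} {mΩ : MeasurableSpace Ω} {μ : Measure Ω}
    [IsProbabilityMeasure μ] {F : ι → MeasurableSpace Ω} (hF : ∀ i, F i ≤ mΩ) (hind : iIndep F μ)
    {T T' : κ → Ω → ℝ} {S S' : κ → Set ι}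
    (hS : Pairwise fun p q => Disjoint (S p) (S q)) (hS' : Pairwise fun p q => Disjoint (S' p) (S' q))
    (hT : ∀ p, Measurable[⨆ i ∈ S p, F i] (T p)) (hT' : ∀ p, Measurable[⨆ i ∈ S' p, F i] (T' p))
    (hTT : ∀ p, IdentDistrib (T p) (T' p) μ μ) (s : Finset κ) :
    IdentDistrib (fun ω => ∑ p ∈ s, T p ω) (fun ω => ∑ p ∈ s, T' p ω) μ μ := by
  classical
  have key : ∀ {T : κ → Ω → ℝ} {S : κ → Set ι} (_ : Pairwise fun p q => Disjoint (S p) (S q))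
      (_ : ∀ p, Measurable[⨆ i ∈ S p, F i] (T p)) (a : κ) (s : Finset κ), a ∉ s →
      IndepFun (T a) (fun ω => ∑ p ∈ s, T p ω) μ := by
    intro T S hS hT a s ha
    have hd : Disjoint (S a) (⋃ p ∈ s, S p) := by
      rw [Set.disjoint_iUnion₂_right]
      exact fun p hp => hS (fun h => ha (h ▸ hp))
    have h := indep_iSup_of_disjoint hF hind hd
    rw [IndepFun_iff_Indep]
    refine indep_of_indep_of_le_left (indep_of_indep_of_le_right h ?_) (hT a).comap_le
    refine Measurable.comap_le ?_
    refine Finset.measurable_fun_sum _ fun p hp => (hT p).mono ?_ le_rfl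
    exact biSup_mono fun i hi => Set.mem_biUnion hp hi
  induction s using Finset.induction_on with
  | empty => simpa using IdentDistrib.refl aemeasurable_const
  | insert a s ha ih =>
    simp only [Finset.sum_insert ha]
    exact (IdentDistrib.prodMk (hTT a) ih (key hS hT a s ha) (key hS' hT' a s ha)).comp
      (measurable_fst.add measurable_snd)

/-! ### The multilevel scheme and its index tree -/

/-- The increment `max (G z) (Q_l^a(z)) - 1_{l ≥ 1} max (G z) (Q_{l-1}^b(z))` at a deterministic
point `z`. -/
def incr {Ω 𝕏 : Type*} (G : 𝕏 → ℝ) (Q : ℕ → List ℤ → 𝕏 → Ω → ℝ) (l : ℕ) (a b : List ℤ)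
    (z : 𝕏) (ω : Ω) : ℝ :=
  max (G z) (Q l a z ω) - if l = 0 then 0 else max (G z) (Q (l - 1) b z ω)

/-- The summand of level `l` and sample number `i + 1` in the definition of `Q_n^θ(x)`, that is, the
increment at the random point `X^{(θ,l,i+1)}(x)`. -/
def summand {Ω 𝕏 : Type*} (G : 𝕏 → ℝ) (X : List ℤ → 𝕏 → Ω → 𝕏) (Q : ℕ → List ℤ → 𝕏 → Ω → ℝ)
    (θ : List ℤ) (l i : ℕ) (x : 𝕏) (ω : Ω) : ℝ :=
  incr G Q l (θ ++ [(l : ℤ), (i : ℤ) + 1]) (θ ++ [-(l : ℤ), (i : ℤ) + 1])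
    (X (θ ++ [(l : ℤ), (i : ℤ) + 1]) x ω) ω

/-- The data and standing assumptions for a single problem of the family. Of the identical
distribution of the random fields only the one-point marginals `X_map` are kept. -/
structure IsScheme {Ω 𝕏 : Type*} [mΩ : MeasurableSpace Ω] [m𝕏 : MeasurableSpace 𝕏]
    (μ : Measure Ω) (M : ℕ) (δ : ℝ) (g G : 𝕏 → ℝ) (F : List ℤ → MeasurableSpace Ω)
    (X : List ℤ → 𝕏 → Ω → 𝕏) (Q : ℕ → List ℤ → 𝕏 → Ω → ℝ) : Prop where
  g_meas : Measurable g
  G_meas : Measurable G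
  F_le : ∀ θ, F θ ≤ mΩ
  indep : iIndep F μ
  X_meas : ∀ θ, Measurable[m𝕏.prod (F θ)] fun p : 𝕏 × Ω => X θ p.1 p.2
  X_map : ∀ θ η x, μ.map (X θ x) = μ.map (X η x)
  Q_eq : ∀ n θ x ω, Q n θ x ω = g x + ∑ l ∈ Finset.range n, (δ * ((M : ℝ) ^ (n - l))⁻¹) *
    ∑ i ∈ Finset.range (M ^ (n - l)), summand G X Q θ l i x ω

/-- The indices that strictly extend `θ`. -/
def Ext (θ : List ℤ) : Set (List ℤ) := {η | ∃ k ζ, η = θ ++ k :: ζ}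

/-- The indices that `summand θ l i` may involve: those starting with `(θ, l, i + 1)` or
`(θ, -l, i + 1)`. -/
def Branch (θ : List ℤ) (l i : ℕ) : Set (List ℤ) :=
  {η | ∃ ζ, η = θ ++ (l : ℤ) :: ((i : ℤ) + 1) :: ζ ∨ η = θ ++ (-(l : ℤ)) :: ((i : ℤ) + 1) :: ζ}

/-- The σ-algebra generated by the `F η` with `η ∈ S`. -/
abbrev sig {Ω : Type*} (F : List ℤ → MeasurableSpace Ω) (S : Set (List ℤ)) : MeasurableSpace Ω :=
  ⨆ η ∈ S, F η

lemma sig_mono {Ω : Type*} (F : List ℤ → MeasurableSpace Ω) {S T : Set (List ℤ)} (h : S ⊆ T) :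
    sig F S ≤ sig F T := biSup_mono h

lemma le_sig {Ω : Type*} (F : List ℤ → MeasurableSpace Ω) {S : Set (List ℤ)} {η} (h : η ∈ S) :
    F η ≤ sig F S := le_biSup F h

lemma branch_subset (θ : List ℤ) (l i : ℕ) : Branch θ l i ⊆ Ext θ := by
  rintro η ⟨ζ, rfl | rfl⟩ <;> exact ⟨_, _, rfl⟩

lemma mem_branch (θ : List ℤ) (l i : ℕ) : θ ++ [(l : ℤ), (i : ℤ) + 1] ∈ Branch θ l i :=
  ⟨[], Or.inl rfl⟩

lemma ext_subset_branch (θ : List ℤ) (l i : ℕ) :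
    Ext (θ ++ [(l : ℤ), (i : ℤ) + 1]) ∪ Ext (θ ++ [-(l : ℤ), (i : ℤ) + 1]) ⊆ Branch θ l i := by
  rintro η (⟨k, ζ, rfl⟩ | ⟨k, ζ, rfl⟩)
  · exact ⟨k :: ζ, Or.inl (by simp)⟩
  · exact ⟨k :: ζ, Or.inr (by simp)⟩

lemma branch_disjoint (θ : List ℤ) {l i l' i' : ℕ} (h : (l, i) ≠ (l', i')) :
    Disjoint (Branch θ l i) (Branch θ l' i') := by
  rw [Set.disjoint_left]
  rintro η ⟨ζ, h1⟩ ⟨ζ', h2⟩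
  apply h
  rcases h1 with rfl | rfl <;> rcases h2 with h2 | h2 <;>
    simp only [List.append_cancel_left_eq, List.cons.injEq] at h2 <;>
    exact Prod.ext (by simp only; omega) (by simp only; omega)

/-- The two approximations in one summand use disjoint parts of the tree. For `l = 0` the two sets
coincide, but then the second approximation is absent. -/
lemma ext_disjoint (θ : List ℤ) {l i : ℕ} (h : l ≠ 0) :
    Disjoint (Ext (θ ++ [(l : ℤ), (i : ℤ) + 1])) (Ext (θ ++ [-(l : ℤ), (i : ℤ) + 1])) := by
  rw [Set.disjoint_left]
  rintro η ⟨k, ζ, h1⟩ ⟨k', ζ', h2⟩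
  rw [h1] at h2
  simp only [List.append_assoc, List.append_cancel_left_eq, List.cons_append, List.cons.injEq] at h2
  omega

/-- The state at a node is not used by the approximations evaluated there, whose indices are
longer. -/
lemma node_disjoint (θ : List ℤ) (u v u' v' : ℤ) :
    Disjoint {θ ++ [u, v]} (Ext (θ ++ [u, v]) ∪ Ext (θ ++ [u', v'])) := by
  rw [Set.disjoint_singleton_left]
  rintro (⟨k, ζ, h⟩ | ⟨k, ζ, h⟩) <;>
  · have := congrArg List.length h
    simp at this

section measurability

variable {Ω 𝕏 : Type*} [MeasurableSpace Ω] [MeasurableSpace 𝕏] {M : ℕ} {δ : ℝ} {g G : 𝕏 → ℝ}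
  {X : List ℤ → 𝕏 → Ω → 𝕏} {Q : ℕ → List ℤ → 𝕏 → Ω → ℝ}

lemma measurable_incr_aux (hG : Measurable G) {l : ℕ} {a b : List ℤ}
    (h1 : Measurable fun p : 𝕏 × Ω => Q l a p.1 p.2)
    (h2 : Measurable fun p : 𝕏 × Ω => Q (l - 1) b p.1 p.2) :
    Measurable fun p : 𝕏 × Ω => incr G Q l a b p.1 p.2 := by
  unfold incr
  have hG' : Measurable fun p : 𝕏 × Ω => G p.1 := hG.comp measurable_fst
  split_ifs
  · exact (hG'.max h1).sub measurable_const
  · exact (hG'.max h1).sub (hG'.max h2)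

/-- Stated for an arbitrary σ-algebra on `Ω`, so that it applies to the sub-σ-algebras `sig F S`. -/
lemma measurable_Q_aux (hg : Measurable g) (hG : Measurable G)
    (hrec : ∀ n θ x ω, Q n θ x ω = g x + ∑ l ∈ Finset.range n, (δ * ((M : ℝ) ^ (n - l))⁻¹) *
      ∑ i ∈ Finset.range (M ^ (n - l)), summand G X Q θ l i x ω) (n : ℕ) (θ : List ℤ)
    (hX : ∀ η ∈ Ext θ, Measurable fun p : 𝕏 × Ω => X η p.1 p.2) :
    Measurable fun p : 𝕏 × Ω => Q n θ p.1 p.2 := by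
  induction n using Nat.strong_induction_on generalizing θ with
  | _ n ih =>
    simp_rw [hrec n θ]
    refine (hg.comp measurable_fst).add (Finset.measurable_fun_sum _ fun l hl => ?_)
    refine (Finset.measurable_fun_sum _ fun i _ => ?_).const_mul _
    have hl := Finset.mem_range.1 hl
    have hsub := (ext_subset_branch θ l i).trans (branch_subset θ l i)
    have h1 := ih l hl (θ ++ [(l : ℤ), (i : ℤ) + 1]) fun η hη => hX η (hsub (Or.inl hη))
    have h2 := ih (l - 1) (by omega) (θ ++ [-(l : ℤ), (i : ℤ) + 1])
      fun η hη => hX η (hsub (Or.inr hη))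
    exact (measurable_incr_aux hG h1 h2).comp
      ((hX _ (branch_subset θ l i (mem_branch θ l i))).prodMk measurable_snd)

end measurability

namespace IsScheme

variable {Ω 𝕏 : Type*} [mΩ : MeasurableSpace Ω] [m𝕏 : MeasurableSpace 𝕏]
    {μ : Measure Ω} {M : ℕ} {δ : ℝ} {g G : 𝕏 → ℝ} {F : List ℤ → MeasurableSpace Ω}
    {X : List ℤ → 𝕏 → Ω → 𝕏} {Q : ℕ → List ℤ → 𝕏 → Ω → ℝ}

omit mΩ in
lemma prod_mono {m₁ m₂ : MeasurableSpace Ω} (h : m₁ ≤ m₂) : m𝕏.prod m₁ ≤ m𝕏.prod m₂ :=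
  sup_le_sup le_rfl (MeasurableSpace.comap_mono h)

lemma sig_le (h : IsScheme μ M δ g G F X Q) (S : Set (List ℤ)) : sig F S ≤ mΩ :=
  iSup₂_le fun η _ => h.F_le η

lemma measurable_Q_sig (h : IsScheme μ M δ g G F X Q) (n : ℕ) (θ : List ℤ) {S : Set (List ℤ)}
    (hS : Ext θ ⊆ S) : Measurable[m𝕏.prod (sig F S)] fun p : 𝕏 × Ω => Q n θ p.1 p.2 :=
  @measurable_Q_aux Ω 𝕏 (sig F S) m𝕏 M δ g G X Q h.g_meas h.G_meas h.Q_eq n θ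
    fun η hη => (h.X_meas η).mono (prod_mono (le_sig F (hS hη))) le_rfl

lemma measurable_incr_sig (h : IsScheme μ M δ g G F X Q) (l : ℕ) (a b : List ℤ)
    {S : Set (List ℤ)} (hS : Ext a ∪ Ext b ⊆ S) :
    Measurable[m𝕏.prod (sig F S)] fun p : 𝕏 × Ω => incr G Q l a b p.1 p.2 :=
  @measurable_incr_aux Ω 𝕏 (sig F S) m𝕏 G Q h.G_meas l a b
    (h.measurable_Q_sig l a (Set.subset_union_left.trans hS))
    (h.measurable_Q_sig (l - 1) b (Set.subset_union_right.trans hS))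

lemma measurable_X_sig (h : IsScheme μ M δ g G F X Q) (η : List ℤ) {S : Set (List ℤ)}
    (hS : η ∈ S) (x : 𝕏) : Measurable[sig F S] (X η x) := by
  have h1 := (h.X_meas η).mono (prod_mono (le_sig F hS)) le_rfl
  exact @Measurable.comp _ _ _ (sig F S) (m𝕏.prod (sig F S)) m𝕏 _ _ h1
    (@measurable_prodMk_left _ _ m𝕏 (sig F S) x)

lemma measurable_X (h : IsScheme μ M δ g G F X Q) (η : List ℤ) (x : 𝕏) : Measurable (X η x) :=
  (h.measurable_X_sig η (Set.mem_univ _) x).mono (h.sig_le _) le_rfl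

lemma measurable_Q (h : IsScheme μ M δ g G F X Q) (n : ℕ) (θ : List ℤ) :
    Measurable fun p : 𝕏 × Ω => Q n θ p.1 p.2 :=
  (h.measurable_Q_sig n θ (Set.subset_univ _)).mono (prod_mono (h.sig_le _)) le_rfl

lemma measurable_Q_left_sig (h : IsScheme μ M δ g G F X Q) (n : ℕ) (θ : List ℤ) (x : 𝕏) :
    Measurable[sig F (Ext θ)] (Q n θ x) :=
  @Measurable.comp _ _ _ (sig F (Ext θ)) (m𝕏.prod (sig F (Ext θ))) _ _ _
    (h.measurable_Q_sig n θ subset_rfl) (@measurable_prodMk_left _ _ m𝕏 (sig F (Ext θ)) x)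

lemma measurable_Q_left (h : IsScheme μ M δ g G F X Q) (n : ℕ) (θ : List ℤ) (x : 𝕏) :
    Measurable (Q n θ x) := (h.measurable_Q_left_sig n θ x).mono (h.sig_le _) le_rfl

lemma measurable_summand_sig (h : IsScheme μ M δ g G F X Q) (θ : List ℤ) (l i : ℕ) (x : 𝕏) :
    Measurable[sig F (Branch θ l i)] (summand G X Q θ l i x) := by
  have h1 := h.measurable_incr_sig l (θ ++ [(l : ℤ), (i : ℤ) + 1]) (θ ++ [-(l : ℤ), (i : ℤ) + 1])
    (ext_subset_branch θ l i)
  have h2 := h.measurable_X_sig _ (mem_branch θ l i) x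
  exact @Measurable.comp _ _ _ (sig F (Branch θ l i)) (m𝕏.prod (sig F (Branch θ l i))) _ _ _ h1
    (@Measurable.prodMk _ (sig F (Branch θ l i)) _ _ m𝕏 (sig F (Branch θ l i)) _ _ h2
      (@measurable_id _ (sig F (Branch θ l i))))

lemma indep_sig (h : IsScheme μ M δ g G F X Q) {S T : Set (List ℤ)} (hST : Disjoint S T) :
    Indep (sig F S) (sig F T) μ := indep_iSup_of_disjoint h.F_le h.indep hST

/-- The law of `Q_n^θ(x)` does not depend on the index `θ`. By induction on `n`: the summands are
independent, and the law of each one is determined by the law of its state and, at every frozen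
point, by the laws of two independent approximations of lower level. -/
lemma identDistrib_Q [IsProbabilityMeasure μ] (h : IsScheme μ M δ g G F X Q) (n : ℕ)
    (θ θ' : List ℤ) (x : 𝕏) : IdentDistrib (Q n θ x) (Q n θ' x) μ μ := by
  induction n using Nat.strong_induction_on generalizing θ θ' x with
  | _ n ih =>
    have hterm : ∀ l < n, ∀ i, IdentDistrib (summand G X Q θ l i x) (summand G X Q θ' l i x) μ μ := by
      intro l hl i
      refine identDistrib_freeze (h.sig_le _) (h.sig_le _)
        (h.indep_sig (node_disjoint θ l (i + 1) (-l) (i + 1))) (h.sig_le _) (h.sig_le _)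
        (h.indep_sig (node_disjoint θ' l (i + 1) (-l) (i + 1)))
        (h.measurable_X_sig _ (Set.mem_singleton _) x)
        (h.measurable_X_sig _ (Set.mem_singleton _) x)
        (h.measurable_incr_sig l _ _ subset_rfl) (h.measurable_incr_sig l _ _ subset_rfl)
        (h.X_map _ _ x) fun z => ?_
      unfold incr
      have hm : Measurable fun y : ℝ => max (G z) y := measurable_const.max measurable_id
      by_cases hl0 : l = 0
      · simp only [hl0, if_true, sub_zero]
        exact (ih 0 (by omega) _ _ z).comp hm
      · simp only [hl0, if_false]
        have hi : ∀ θ : List ℤ, IndepFun (Q l (θ ++ [(l : ℤ), (i : ℤ) + 1]) z)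
            (Q (l - 1) (θ ++ [-(l : ℤ), (i : ℤ) + 1]) z) μ := fun θ => by
          rw [IndepFun_iff_Indep]
          exact indep_of_indep_of_le_left (indep_of_indep_of_le_right
            (h.indep_sig (ext_disjoint θ hl0)) (h.measurable_Q_left_sig _ _ z).comap_le)
            (h.measurable_Q_left_sig _ _ z).comap_le
        exact (IdentDistrib.prodMk (ih l hl _ (θ' ++ [(l : ℤ), (i : ℤ) + 1]) z)
          (ih (l - 1) (by omega) _ (θ' ++ [-(l : ℤ), (i : ℤ) + 1]) z) (hi θ) (hi θ')).comp
          ((hm.comp measurable_fst).sub (hm.comp measurable_snd))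
    -- Levels are restricted to `l < n`, where the induction hypothesis applies.
    have hsum := identDistrib_sum h.F_le h.indep
      (κ := {p : ℕ × ℕ // p.1 < n})
      (T := fun p ω => (δ * ((M : ℝ) ^ (n - p.1.1))⁻¹) * summand G X Q θ p.1.1 p.1.2 x ω)
      (T' := fun p ω => (δ * ((M : ℝ) ^ (n - p.1.1))⁻¹) * summand G X Q θ' p.1.1 p.1.2 x ω)
      (S := fun p => Branch θ p.1.1 p.1.2) (S' := fun p => Branch θ' p.1.1 p.1.2)
      (fun p q hpq => branch_disjoint θ fun hh => hpq (Subtype.ext hh))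
      (fun p q hpq => branch_disjoint θ' fun hh => hpq (Subtype.ext hh))
      (fun p => (h.measurable_summand_sig θ _ _ x).const_mul _)
      (fun p => (h.measurable_summand_sig θ' _ _ x).const_mul _)
      (fun p => (hterm p.1.1 p.2 p.1.2).const_mul _)
      (((Finset.range n).sigma fun l => Finset.range (M ^ (n - l))).attach.map
        ⟨fun p => ⟨(p.1.1, p.1.2), Finset.mem_range.1 (Finset.mem_sigma.1 p.2).1⟩,
          fun p q hpq => by
            obtain ⟨⟨a, b⟩, hp⟩ := p
            obtain ⟨⟨c, d⟩, hq⟩ := q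
            simpa using hpq⟩)
    have hQ : ∀ θ, Q n θ x = fun ω => g x + ∑ p ∈ ((Finset.range n).sigma fun l =>
        Finset.range (M ^ (n - l))).attach, (δ * ((M : ℝ) ^ (n - p.1.1))⁻¹) *
          summand G X Q θ p.1.1 p.1.2 x ω := fun θ => by
      ext ω
      rw [h.Q_eq n θ x ω, Finset.sum_attach ((Finset.range n).sigma fun l =>
        Finset.range (M ^ (n - l))) (fun p => (δ * ((M : ℝ) ^ (n - p.1))⁻¹) *
          summand G X Q θ p.1 p.2 x ω), Finset.sum_sigma]
      simp_rw [Finset.mul_sum]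
    simp only [Finset.sum_map] at hsum
    rw [hQ, hQ]
    exact hsum.comp (measurable_const.add measurable_id)

end IsScheme

/-! ### The error recursion -/

/-- A geometric convolution bound; the relation `r * c + r = ρ * c` says `c = r / (ρ - r)`. -/
lemma geom_conv_le {r ρ c : ℝ} (hr : 0 ≤ r) (hc : 0 ≤ c) (hrc : r * c + r = ρ * c) (n : ℕ) :
    ∑ l ∈ Finset.range n, r ^ (n - l) * ρ ^ l ≤ c * ρ ^ n := by
  induction n with
  | zero => simpa using hc
  | succ n ih =>
    rw [Finset.sum_range_succ]
    have h1 : ∑ l ∈ Finset.range n, r ^ (n + 1 - l) * ρ ^ l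
        = r * ∑ l ∈ Finset.range n, r ^ (n - l) * ρ ^ l := by
      rw [Finset.mul_sum]
      refine Finset.sum_congr rfl fun l hl => ?_
      rw [Nat.succ_sub (Finset.mem_range.1 hl).le, pow_succ]
      ring
    rw [h1]
    calc r * ∑ l ∈ Finset.range n, r ^ (n - l) * ρ ^ l + r ^ (n + 1 - n) * ρ ^ n
        ≤ r * (c * ρ ^ n) + r * ρ ^ n := by
          rw [Nat.add_sub_cancel_left, pow_one]
          gcongr
      _ = (r * c + r) * ρ ^ n := by ring
      _ = c * ρ ^ (n + 1) := by rw [hrc]; ring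

/-- The sequence `A * ρ ^ n` is a supersolution of the error recursion. -/
lemma error_recursion_le {r ρ c δ A : ℝ} (hr : 0 ≤ r) (hc : 0 ≤ c) (hrc : r * c + r = ρ * c)
    (hρ : 0 < ρ) (hδ : 0 ≤ δ) (hA : 0 ≤ A) (h : δ + δ * (ρ + 1) * c ≤ ρ) {n : ℕ} (hn : n ≠ 0) :
    δ * (A * ρ ^ (n - 1)) + ∑ l ∈ Finset.range n, δ * r ^ (n - l) *
      (A * ρ ^ l + if l = 0 then 0 else A * ρ ^ (l - 1)) ≤ A * ρ ^ n := by
  obtain ⟨k, rfl⟩ := Nat.exists_eq_succ_of_ne_zero hn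
  have hb : ∀ l, ρ * (A * ρ ^ l + if l = 0 then 0 else A * ρ ^ (l - 1)) ≤ A * (ρ + 1) * ρ ^ l := by
    intro l
    rcases l with _ | l
    · simp only [if_true, pow_zero]
      nlinarith
    · simp only [Nat.succ_ne_zero, if_false, Nat.add_sub_cancel, pow_succ]
      linarith
  have hs : ρ * ∑ l ∈ Finset.range (k + 1), δ * r ^ (k + 1 - l) *
      (A * ρ ^ l + if l = 0 then 0 else A * ρ ^ (l - 1))
      ≤ δ * A * (ρ + 1) * (c * ρ ^ (k + 1)) := by
    calc _ = ∑ l ∈ Finset.range (k + 1), δ * r ^ (k + 1 - l) *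
          (ρ * (A * ρ ^ l + if l = 0 then 0 else A * ρ ^ (l - 1))) := by
            rw [Finset.mul_sum]
            exact Finset.sum_congr rfl fun l _ => by ring
      _ ≤ ∑ l ∈ Finset.range (k + 1), δ * r ^ (k + 1 - l) * (A * (ρ + 1) * ρ ^ l) :=
          Finset.sum_le_sum fun l _ => mul_le_mul_of_nonneg_left (hb l) (by positivity)
      _ = δ * A * (ρ + 1) * ∑ l ∈ Finset.range (k + 1), r ^ (k + 1 - l) * ρ ^ l := by
            rw [Finset.mul_sum]
            exact Finset.sum_congr rfl fun l _ => by ring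
      _ ≤ _ := mul_le_mul_of_nonneg_left (geom_conv_le hr hc hrc _) (by positivity)
  refine le_of_mul_le_mul_left ?_ hρ
  rw [mul_add]
  have e : ρ * (δ * (A * ρ ^ (k + 1 - 1))) = δ * (A * ρ ^ (k + 1)) := by
    rw [Nat.add_sub_cancel, pow_succ]; ring
  have h0 : 0 ≤ A * ρ ^ (k + 1) := by positivity
  simp only [Nat.succ_eq_add_one] at *
  rw [e]
  nlinarith [mul_le_mul_of_nonneg_right h h0]

lemma abs_integral_le_of_eLpNorm_two {Ω : Type*} [MeasurableSpace Ω] {μ : Measure Ω}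
    [IsProbabilityMeasure μ] {f : Ω → ℝ} (hf : AEStronglyMeasurable f μ) {b : ℝ} (hb : 0 ≤ b)
    (h : eLpNorm f 2 μ ≤ ENNReal.ofReal b) : |∫ ω, f ω ∂μ| ≤ b := by
  have h1 : ‖∫ ω, f ω ∂μ‖ₑ ≤ ENNReal.ofReal b := by
    calc _ ≤ ∫⁻ ω, ‖f ω‖ₑ ∂μ := enorm_integral_le_lintegral_enorm f
      _ = eLpNorm f 1 μ := eLpNorm_one_eq_lintegral_enorm.symm
      _ ≤ eLpNorm f 2 μ := eLpNorm_le_eLpNorm_of_exponent_le (by norm_num) hf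
      _ ≤ _ := h
  rw [Real.enorm_eq_ofReal_abs, ENNReal.ofReal_le_ofReal_iff hb] at h1
  exact h1

lemma abs_max_sub_max_le (a b c : ℝ) : |max a b - max a c| ≤ |b - c| := by
  rw [max_comm a b, max_comm a c]
  exact abs_max_sub_max_le_abs b c a

namespace IsScheme

variable {Ω 𝕏 : Type*} [mΩ : MeasurableSpace Ω] [m𝕏 : MeasurableSpace 𝕏]
    {μ : Measure Ω} [IsProbabilityMeasure μ] {M : ℕ} {δ : ℝ} {g G : 𝕏 → ℝ}
    {F : List ℤ → MeasurableSpace Ω}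
    {X : List ℤ → 𝕏 → Ω → 𝕏} {Q : ℕ → List ℤ → 𝕏 → Ω → ℝ}

/-- The value `max (G(X^a(x))) (Q_l^b(X^a(x)))` of the approximation `Q_l^b` after one step of
`X^a` from `x`. -/
def payoff (G : 𝕏 → ℝ) (X : List ℤ → 𝕏 → Ω → 𝕏) (Q : ℕ → List ℤ → 𝕏 → Ω → ℝ)
    (l : ℕ) (a b : List ℤ) (x : 𝕏) (ω : Ω) : ℝ :=
  max (G (X a x ω)) (Q l b (X a x ω) ω)

omit [IsProbabilityMeasure μ] in
lemma indep_node (h : IsScheme μ M δ g G F X Q) {a b : List ℤ} (hab : a ∉ Ext b) :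
    Indep (sig F {a}) (sig F (Ext b)) μ :=
  h.indep_sig (Set.disjoint_singleton_left.2 hab)

omit [IsProbabilityMeasure μ] in
lemma measurable_payoff_aux (h : IsScheme μ M δ g G F X Q) (l : ℕ) (b : List ℤ) :
    Measurable[m𝕏.prod (sig F (Ext b))] fun p : 𝕏 × Ω => max (G p.1) (Q l b p.1 p.2) :=
  (h.G_meas.comp (@measurable_fst _ _ m𝕏 (sig F (Ext b)))).max
    (h.measurable_Q_sig l b subset_rfl)

omit [IsProbabilityMeasure μ] in
lemma measurable_payoff (h : IsScheme μ M δ g G F X Q) (l : ℕ) (a b : List ℤ) (x : 𝕏) :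
    Measurable (payoff G X Q l a b x) :=
  (h.G_meas.comp (h.measurable_X a x)).max
    ((h.measurable_Q l b).comp ((h.measurable_X a x).prodMk measurable_id))

omit [IsProbabilityMeasure μ] in
lemma measurable_summand (h : IsScheme μ M δ g G F X Q) (θ : List ℤ) (l i : ℕ) (x : 𝕏) :
    Measurable (summand G X Q θ l i x) :=
  (h.measurable_summand_sig θ l i x).mono (h.sig_le _) le_rfl

lemma identDistrib_payoff (h : IsScheme μ M δ g G F X Q) (l : ℕ) {a b a' b' : List ℤ} (x : 𝕏)
    (hab : a ∉ Ext b) (hab' : a' ∉ Ext b') :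
    IdentDistrib (payoff G X Q l a b x) (payoff G X Q l a' b' x) μ μ := by
  refine identDistrib_freeze (H := fun z ω => max (G z) (Q l b z ω))
    (H' := fun z ω => max (G z) (Q l b' z ω)) (h.sig_le _) (h.sig_le _) (h.indep_node hab)
    (h.sig_le _) (h.sig_le _) (h.indep_node hab')
    (h.measurable_X_sig _ (Set.mem_singleton _) x) (h.measurable_X_sig _ (Set.mem_singleton _) x)
    (h.measurable_payoff_aux l b) (h.measurable_payoff_aux l b') (h.X_map _ _ x) fun z => ?_
  exact (h.identDistrib_Q l b b' z).comp (u := fun y => max (G z) y)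
    (measurable_const.max measurable_id)

variable {q : 𝕏 → ℝ} {A : ℝ}

lemma eLpNorm_Q_comp_le (h : IsScheme μ M δ g G F X Q) (hq : Measurable q) {l : ℕ}
    {a b : List ℤ} (x : 𝕏) (hab : a ∉ Ext b) {e : ℝ≥0∞}
    (he : ∀ z, eLpNorm (fun ω => Q l b z ω - q z) 2 μ ≤ e) :
    eLpNorm (fun ω => Q l b (X a x ω) ω - q (X a x ω)) 2 μ ≤ e :=
  eLpNorm_freeze (H := fun z ω => Q l b z ω - q z) (h.sig_le _) (h.sig_le _) (h.indep_node hab)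
    (h.measurable_X_sig _ (Set.mem_singleton _) x)
    ((h.measurable_Q_sig l b subset_rfl).sub
      (hq.comp (@measurable_fst _ _ m𝕏 (sig F (Ext b))))) he

lemma eLpNorm_payoff_sub_le (h : IsScheme μ M δ g G F X Q) (hq : Measurable q) {l : ℕ}
    {a b : List ℤ} (x : 𝕏) (hab : a ∉ Ext b) {e : ℝ≥0∞}
    (he : ∀ z, eLpNorm (fun ω => Q l b z ω - q z) 2 μ ≤ e) :
    eLpNorm (fun ω => payoff G X Q l a b x ω - max (G (X a x ω)) (q (X a x ω))) 2 μ ≤ e :=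
  (eLpNorm_mono fun _ => abs_max_sub_max_le _ _ _).trans (h.eLpNorm_Q_comp_le hq x hab he)

lemma memLp_max (h : IsScheme μ M δ g G F X Q) (hq : Measurable q) (a : List ℤ) (x : 𝕏) {K : ℝ}
    (hK : ∀ z, |max (G z) (q z)| ≤ K) :
    MemLp (fun ω => max (G (X a x ω)) (q (X a x ω))) 2 μ :=
  MemLp.of_bound ((h.G_meas.comp (h.measurable_X a x)).max
    (hq.comp (h.measurable_X a x))).aestronglyMeasurable K (ae_of_all _ fun _ => hK _)

lemma memLp_payoff (h : IsScheme μ M δ g G F X Q) (hq : Measurable q) {l : ℕ}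
    {a b : List ℤ} (x : 𝕏) (hab : a ∉ Ext b) {K : ℝ} (hK : ∀ z, |max (G z) (q z)| ≤ K) {e : ℝ}
    (he : ∀ z, eLpNorm (fun ω => Q l b z ω - q z) 2 μ ≤ ENNReal.ofReal e) :
    MemLp (payoff G X Q l a b x) 2 μ := by
  have h1 := h.memLp_max (μ := μ) hq a x hK
  have h2 : MemLp (fun ω => payoff G X Q l a b x ω - max (G (X a x ω)) (q (X a x ω))) 2 μ :=
    ⟨(h.measurable_payoff l a b x).aestronglyMeasurable.sub h1.1,
      (h.eLpNorm_payoff_sub_le hq x hab he).trans_lt ENNReal.ofReal_lt_top⟩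
  exact (h2.add h1).ae_eq (ae_of_all _ fun ω => by simp)

/-- The geometric error bound, uniform in the starting point and the index. The bounds `hgq` and
`hGg` cover level `0`, where `Q_0 = g` and no lower level is subtracted; `K` serves only
integrability. -/
theorem eLpNorm_error_le (h : IsScheme μ M δ g G F X Q) (hM : M ≠ 0) (hq : Measurable q)
    (hδ : 0 ≤ δ)
    (hfix : ∀ x, q x = g x + δ * ∫ ω, max (G (X [0] x ω)) (q (X [0] x ω)) ∂μ)
    (hA : 0 ≤ A) (hgq : ∀ z, |g z - q z| ≤ A) (hGg : ∀ z, |max (G z) (g z)| ≤ A)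
    {K : ℝ} (hK : ∀ z, |max (G z) (q z)| ≤ K)
    {r ρ c : ℝ} (hr : r = (√(M : ℝ))⁻¹) (hρ : 0 < ρ) (hc : 0 ≤ c)
    (hrc : r * c + r = ρ * c) (hδρ : δ + δ * (ρ + 1) * c ≤ ρ) (n : ℕ) (θ : List ℤ) (x : 𝕏) :
    eLpNorm (fun ω => Q n θ x ω - q x) 2 μ ≤ ENNReal.ofReal (A * ρ ^ n) := by
  have hr0 : 0 ≤ r := by rw [hr]; positivity
  have hM' : (M : ℝ) ≠ 0 := by exact_mod_cast hM
  induction n using Nat.strong_induction_on generalizing θ x with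
  | _ n ih =>
    rcases eq_or_ne n 0 with rfl | hn
    · have h0 : ∀ ω, Q 0 θ x ω = g x := fun ω => by rw [h.Q_eq]; simp
      simp only [h0]
      rw [eLpNorm_const _ (by norm_num) (IsProbabilityMeasure.ne_zero μ)]
      simpa [Real.enorm_eq_ofReal_abs] using ENNReal.ofReal_le_ofReal (hgq x)
    set e : ℕ → ℝ := fun l => A * ρ ^ l with he
    have he0 : ∀ l, 0 ≤ e l := fun l => by positivity
    have hnot0 : ([0] : List ℤ) ∉ Ext [0] := by
      rintro ⟨k, ζ, hk⟩
      simp at hk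
    set m : ℕ → ℝ := fun l => ∫ ω, payoff G X Q l [0] [0] x ω ∂μ with hm
    have hna : ∀ u v : ℤ, θ ++ [u, v] ∉ Ext (θ ++ [u, v]) := fun u v hk =>
      Set.disjoint_singleton_left.1 (node_disjoint θ u v u v) (Or.inl hk)
    have hnb : ∀ u v u' v' : ℤ, θ ++ [u, v] ∉ Ext (θ ++ [u', v']) := fun u v u' v' hk =>
      Set.disjoint_singleton_left.1 (node_disjoint θ u v u' v') (Or.inr hk)
    have hsplit : ∀ l i, summand G X Q θ l i x = fun ω =>
        payoff G X Q l (θ ++ [(l : ℤ), (i : ℤ) + 1]) (θ ++ [(l : ℤ), (i : ℤ) + 1]) x ω -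
          if l = 0 then 0 else payoff G X Q (l - 1) (θ ++ [(l : ℤ), (i : ℤ) + 1])
            (θ ++ [-(l : ℤ), (i : ℤ) + 1]) x ω := fun l i => rfl
    -- All payoffs of level `l` have the law of a reference one, so the expected increments are
    -- differences of the numbers `m l`.
    have hE : ∀ l < n, ∀ i, ∫ ω, summand G X Q θ l i x ω ∂μ
        = m l - if l = 0 then 0 else m (l - 1) := by
      intro l hl i
      have e1 := (h.identDistrib_payoff l x (hna l (i + 1)) hnot0).integral_eq
      have i1 := (h.memLp_payoff hq x (hna l (i + 1)) hK (ih l hl _)).integrable (by norm_num)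
      rw [hsplit]
      by_cases hl0 : l = 0
      · simp only [hl0, if_true, sub_zero] at e1 ⊢
        exact e1
      · simp only [hl0, if_false]
        have e2 := (h.identDistrib_payoff (l - 1) x
          (hnb l (i + 1) (-l) (i + 1)) hnot0).integral_eq
        have i2 := (h.memLp_payoff hq x (hnb l (i + 1) (-l) (i + 1)) hK
          (ih (l - 1) (by omega) _)).integrable (by norm_num)
        rw [integral_sub i1 i2, e1, e2]
    -- At level `0` the increment is `max G g`, bounded by `A = e 0`; at higher levels it is compared
    -- with `q` through the triangle inequality.
    have hN : ∀ l < n, ∀ i, eLpNorm (summand G X Q θ l i x) 2 μ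
        ≤ ENNReal.ofReal (e l + if l = 0 then 0 else e (l - 1)) := by
      intro l hl i
      by_cases hl0 : l = 0
      · subst hl0
        have hb : ∀ ω, ‖summand G X Q θ 0 i x ω‖ ≤ A := fun ω => by
          rw [hsplit]
          have h0 : ∀ η z ω, Q 0 η z ω = g z := fun η z ω => by rw [h.Q_eq]; simp
          simp only [if_true, sub_zero, payoff, h0]
          exact hGg _
        refine (eLpNorm_le_of_ae_bound (ae_of_all _ hb)).trans ?_
        simp [he]
      · simp only [hl0, if_false]
        rw [ENNReal.ofReal_add (he0 _) (he0 _)]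
        set a := θ ++ [(l : ℤ), (i : ℤ) + 1] with ha
        set b := θ ++ [-(l : ℤ), (i : ℤ) + 1] with hb
        have n1 := h.eLpNorm_Q_comp_le hq x (hna l (i + 1)) (ih l hl _)
        have n2 := h.eLpNorm_Q_comp_le hq x (hnb l (i + 1) (-l) (i + 1)) (ih (l - 1) (by omega) _)
        have s1 : AEStronglyMeasurable (fun ω => Q l a (X a x ω) ω - q (X a x ω)) μ :=
          (((h.measurable_Q l a).comp ((h.measurable_X a x).prodMk measurable_id)).sub
            (hq.comp (h.measurable_X a x))).aestronglyMeasurable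
        have s2 : AEStronglyMeasurable (fun ω => Q (l - 1) b (X a x ω) ω - q (X a x ω)) μ :=
          (((h.measurable_Q (l - 1) b).comp ((h.measurable_X a x).prodMk measurable_id)).sub
            (hq.comp (h.measurable_X a x))).aestronglyMeasurable
        refine le_trans ?_ ((eLpNorm_sub_le s1 s2 (by norm_num)).trans (add_le_add n1 n2))
        refine eLpNorm_mono fun ω => ?_
        rw [hsplit]
        simp only [hl0, if_false, payoff, Pi.sub_apply, sub_sub_sub_cancel_right]
        exact abs_max_sub_max_le _ _ _
    have hL : ∀ l < n, ∀ i, MemLp (summand G X Q θ l i x) 2 μ := fun l hl i =>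
      ⟨(h.measurable_summand θ l i x).aestronglyMeasurable,
        (hN l hl i).trans_lt ENNReal.ofReal_lt_top⟩
    set I : ℝ := ∫ ω, max (G (X [0] x ω)) (q (X [0] x ω)) ∂μ with hI
    have hbias : |m (n - 1) - I| ≤ e (n - 1) := by
      have p1 := h.memLp_payoff hq x hnot0 hK (ih (n - 1) (by omega) _)
      have p2 := h.memLp_max (μ := μ) hq [0] x hK
      rw [hm, hI]
      simp only
      rw [← integral_sub (p1.integrable (by norm_num)) (p2.integrable (by norm_num))]
      exact abs_integral_le_of_eLpNorm_two (p1.1.sub p2.1) (he0 _)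
        (h.eLpNorm_payoff_sub_le hq x hnot0 (ih (n - 1) (by omega) _))
    have htel : ∀ k, ∑ l ∈ Finset.range (k + 1), (m l - if l = 0 then 0 else m (l - 1)) = m k := by
      intro k
      induction k with
      | zero => simp
      | succ k ihk => rw [Finset.sum_range_succ, ihk]; simp
    -- Bias plus centred fluctuations; the expectations of the summands add up to `δ * m (n - 1)`.
    have hdecomp : (fun ω => Q n θ x ω - q x) = (fun _ => δ * (m (n - 1) - I)) +
        ∑ l ∈ Finset.range n, (δ * ((M : ℝ) ^ (n - l))⁻¹) • (fun ω =>
          ∑ i ∈ Finset.range (M ^ (n - l)),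
            (summand G X Q θ l i x ω - ∫ ω', summand G X Q θ l i x ω' ∂μ)) := by
      ext ω
      rw [h.Q_eq n θ x ω, hfix x, Pi.add_apply, Finset.sum_apply]
      simp only [Pi.smul_apply, smul_eq_mul]
      have hs : ∑ l ∈ Finset.range n, (δ * ((M : ℝ) ^ (n - l))⁻¹) *
          ∑ i ∈ Finset.range (M ^ (n - l)), ∫ ω', summand G X Q θ l i x ω' ∂μ
          = δ * m (n - 1) := by
        rw [← htel (n - 1), Nat.sub_add_cancel (Nat.pos_of_ne_zero hn), Finset.mul_sum]
        refine Finset.sum_congr rfl fun l hl => ?_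
        rw [Finset.sum_congr rfl fun i _ => hE l (Finset.mem_range.1 hl) i, Finset.sum_const,
          Finset.card_range, nsmul_eq_mul, Nat.cast_pow]
        field_simp
      simp only [Finset.sum_sub_distrib, mul_sub]
      rw [hs]
      ring
    have hvar : ∀ l ∈ Finset.range n, eLpNorm ((δ * ((M : ℝ) ^ (n - l))⁻¹) • (fun ω =>
          ∑ i ∈ Finset.range (M ^ (n - l)),
            (summand G X Q θ l i x ω - ∫ ω', summand G X Q θ l i x ω' ∂μ))) 2 μ
        ≤ ENNReal.ofReal (δ * r ^ (n - l) * (e l + if l = 0 then 0 else e (l - 1))) := by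
      intro l hl
      have hl := Finset.mem_range.1 hl
      have hb0 : 0 ≤ e l + if l = 0 then 0 else e (l - 1) := by
        have := he0 l
        have := he0 (l - 1)
        split_ifs <;> linarith
      have hind : Pairwise fun i j => IndepFun (summand G X Q θ l i x)
          (summand G X Q θ l j x) μ := by
        intro i j hij
        rw [IndepFun_iff_Indep]
        exact indep_of_indep_of_le_left (indep_of_indep_of_le_right
          (h.indep_sig (branch_disjoint θ fun hh => hij (Prod.ext_iff.1 hh).2))
          (h.measurable_summand_sig θ l j x).comap_le) (h.measurable_summand_sig θ l i x).comap_le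
      have hsum := eLpNorm_sum_sub_integral_le (m := M ^ (n - l)) (hL l hl) hind hb0 (hN l hl)
      rw [eLpNorm_const_smul, Real.enorm_eq_ofReal (by positivity)]
      refine (mul_le_mul_right hsum _).trans ?_
      rw [← ENNReal.ofReal_mul (by positivity)]
      refine ENNReal.ofReal_le_ofReal (le_of_eq ?_)
      have hsq : √((M ^ (n - l) : ℕ) : ℝ) = √(M : ℝ) ^ (n - l) := by
        rw [Nat.cast_pow, Real.sqrt_eq_iff_mul_self_eq (by positivity) (by positivity),
          ← mul_pow, Real.mul_self_sqrt (by positivity)]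
      have hpow : ((M : ℝ) ^ (n - l))⁻¹ * √(M : ℝ) ^ (n - l) = r ^ (n - l) := by
        rw [← inv_pow, ← mul_pow, hr]
        congr 1
        have : √(M : ℝ) ≠ 0 := by positivity
        field_simp
        exact Real.sq_sqrt (by positivity)
      rw [hsq, ← hpow]
      ring
    have hmeas : ∀ l ∈ Finset.range n, AEStronglyMeasurable ((δ * ((M : ℝ) ^ (n - l))⁻¹) •
        (fun ω => ∑ i ∈ Finset.range (M ^ (n - l)),
            (summand G X Q θ l i x ω - ∫ ω', summand G X Q θ l i x ω' ∂μ))) μ := by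
      intro l _
      exact ((Finset.measurable_fun_sum _ fun i _ =>
        (h.measurable_summand θ l i x).sub measurable_const).const_smul _).aestronglyMeasurable
    rw [hdecomp]
    calc _ ≤ eLpNorm (fun _ : Ω => δ * (m (n - 1) - I)) 2 μ + eLpNorm (∑ l ∈ Finset.range n,
          (δ * ((M : ℝ) ^ (n - l))⁻¹) • (fun ω => ∑ i ∈ Finset.range (M ^ (n - l)),
            (summand G X Q θ l i x ω - ∫ ω', summand G X Q θ l i x ω' ∂μ))) 2 μ :=
          eLpNorm_add_le aestronglyMeasurable_const (Finset.aestronglyMeasurable_sum _ hmeas)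
            (by norm_num)
      _ ≤ ENNReal.ofReal (δ * e (n - 1)) + ∑ l ∈ Finset.range n,
          ENNReal.ofReal (δ * r ^ (n - l) * (e l + if l = 0 then 0 else e (l - 1))) := by
          refine add_le_add ?_ ((eLpNorm_sum_le hmeas (by norm_num)).trans
            (Finset.sum_le_sum hvar))
          rw [eLpNorm_const _ (by norm_num) (IsProbabilityMeasure.ne_zero μ)]
          simp only [measure_univ, ENNReal.one_rpow, mul_one]
          rw [Real.enorm_eq_ofReal_abs, abs_mul, abs_of_nonneg hδ]
          exact ENNReal.ofReal_le_ofReal (mul_le_mul_of_nonneg_left hbias hδ)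
      _ = ENNReal.ofReal (δ * e (n - 1) + ∑ l ∈ Finset.range n,
          (δ * r ^ (n - l) * (e l + if l = 0 then 0 else e (l - 1)))) := by
          have hnn : ∀ l ∈ Finset.range n,
              0 ≤ δ * r ^ (n - l) * (e l + if l = 0 then 0 else e (l - 1)) := by
            intro l _
            have := he0 l
            have := he0 (l - 1)
            split_ifs <;> positivity
          rw [ENNReal.ofReal_add (mul_nonneg hδ (he0 _)) (Finset.sum_nonneg hnn),
            ENNReal.ofReal_sum_of_nonneg hnn]
      _ ≤ _ := ENNReal.ofReal_le_ofReal (error_recursion_le hr0 hc hrc hρ hδ hA hδρ hn)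

end IsScheme

/-! ### The Bellman equation -/

section bellman

variable {Ω 𝕏 : Type*} [MeasurableSpace Ω] [MeasurableSpace 𝕏] {μ : Measure Ω}

/-- The Bellman operator `u ↦ g + δ E[max (G(Y)) (u(Y))]`. The integral has its junk value `0` when
the integrand is not integrable; it is used only for bounded measurable `u`. -/
noncomputable def bellman (μ : Measure Ω) (δ : ℝ) (g G : 𝕏 → ℝ) (Y : 𝕏 → Ω → 𝕏) (u : 𝕏 → ℝ) (x : 𝕏) : ℝ :=
  g x + δ * ∫ ω, max (G (Y x ω)) (u (Y x ω)) ∂μ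

variable [IsProbabilityMeasure μ] {δ s K : ℝ} {g G : 𝕏 → ℝ} {Y : 𝕏 → Ω → 𝕏}

omit [IsProbabilityMeasure μ] in
lemma measurable_max_comp (hG : Measurable G) (hY : Measurable fun p : 𝕏 × Ω => Y p.1 p.2)
    {u : 𝕏 → ℝ} (hu : Measurable u) :
    Measurable fun p : 𝕏 × Ω => max (G (Y p.1 p.2)) (u (Y p.1 p.2)) :=
  (hG.comp hY).max (hu.comp hY)

lemma measurable_bellman (hg : Measurable g) (hG : Measurable G)
    (hY : Measurable fun p : 𝕏 × Ω => Y p.1 p.2) {u : 𝕏 → ℝ} (hu : Measurable u) :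
    Measurable (bellman μ δ g G Y u) :=
  hg.add ((measurable_max_comp hG hY hu).stronglyMeasurable.integral_prod_right'.measurable.const_mul
    δ)

lemma integrable_max_comp (hG : Measurable G) (hY : Measurable fun p : 𝕏 × Ω => Y p.1 p.2)
    {u : 𝕏 → ℝ} (hu : Measurable u) (hGK : ∀ x, |G x| ≤ K) {B : ℝ} (huB : ∀ x, |u x| ≤ B) (x : 𝕏) :
    Integrable (fun ω => max (G (Y x ω)) (u (Y x ω))) μ :=
  Integrable.of_bound ((measurable_max_comp hG hY hu).comp measurable_prodMk_left).aestronglyMeasurable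
    (max K B) (ae_of_all _ fun _ => abs_max_le_max_abs_abs.trans (max_le_max (hGK _) (huB _)))

lemma abs_bellman_sub_le (hG : Measurable G) (hY : Measurable fun p : 𝕏 × Ω => Y p.1 p.2)
    (hδ : 0 ≤ δ) (hδs : δ ≤ s) (hGK : ∀ x, |G x| ≤ K) {u v : 𝕏 → ℝ} (hu : Measurable u)
    (hv : Measurable v) {B B' D : ℝ} (huB : ∀ x, |u x| ≤ B) (hvB : ∀ x, |v x| ≤ B')
    (hD : ∀ x, |u x - v x| ≤ D) (x : 𝕏) :
    |bellman μ δ g G Y u x - bellman μ δ g G Y v x| ≤ s * D := by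
  have hD0 : 0 ≤ D := (abs_nonneg _).trans (hD x)
  unfold bellman
  rw [add_sub_add_left_eq_sub, ← mul_sub, ← integral_sub (integrable_max_comp hG hY hu hGK huB x)
    (integrable_max_comp hG hY hv hGK hvB x), abs_mul, abs_of_nonneg hδ]
  refine mul_le_mul hδs ?_ (abs_nonneg _) (hδ.trans hδs)
  have := norm_integral_le_of_norm_le_const (μ := μ) (C := D)
    (f := fun ω => max (G (Y x ω)) (u (Y x ω)) - max (G (Y x ω)) (v (Y x ω)))
    (ae_of_all _ fun ω => (abs_max_sub_max_le _ _ _).trans (hD _))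
  simpa using this

omit [MeasurableSpace 𝕏] in
lemma abs_bellman_le (hδ : 0 ≤ δ) (hδs : δ ≤ s) (hs1 : s < 1) (hK : ∀ x, |g x| + |G x| ≤ K)
    {u : 𝕏 → ℝ} (hu : ∀ x, |u x| ≤ K / (1 - s)) (x : 𝕏) :
    |bellman μ δ g G Y u x| ≤ K / (1 - s) := by
  have hK0 : 0 ≤ K := (add_nonneg (abs_nonneg _) (abs_nonneg _)).trans (hK x)
  have h1s : 0 < 1 - s := by linarith
  have hgK : |g x| ≤ K := by linarith [hK x, abs_nonneg (G x)]
  have hKB : K ≤ K / (1 - s) := by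
    rw [le_div_iff₀ h1s]
    nlinarith
  have hint : |∫ ω, max (G (Y x ω)) (u (Y x ω)) ∂μ| ≤ K / (1 - s) := by
    have := norm_integral_le_of_norm_le_const (μ := μ) (C := K / (1 - s))
      (f := fun ω => max (G (Y x ω)) (u (Y x ω)))
      (ae_of_all _ fun ω => abs_max_le_max_abs_abs.trans (max_le
        (by linarith [hK (Y x ω), abs_nonneg (g (Y x ω))]) (hu _)))
    simpa using this
  calc |bellman μ δ g G Y u x| ≤ |g x| + |δ * ∫ ω, max (G (Y x ω)) (u (Y x ω)) ∂μ| := abs_add_le _ _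
    _ ≤ K + s * (K / (1 - s)) := by
      rw [abs_mul, abs_of_nonneg hδ]
      exact add_le_add hgK (mul_le_mul hδs hint (abs_nonneg _) (hδ.trans hδs))
    _ = K / (1 - s) := by field_simp; ring

/-- The Bellman equation has exactly one bounded measurable solution, and it is bounded by
`K / (1 - s)`. The solution is the pointwise limit of the Picard iterates started at `0`, which keeps
it measurable. -/
theorem exists_unique_bellman (hg : Measurable g) (hG : Measurable G)
    (hY : Measurable fun p : 𝕏 × Ω => Y p.1 p.2)
    (hδ : 0 ≤ δ) (hδs : δ ≤ s) (hs1 : s < 1) (hK : ∀ x, |g x| + |G x| ≤ K) (hK0 : 0 ≤ K) :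
    ∃ q : 𝕏 → ℝ, Measurable q ∧ (∀ y, |q y| ≤ K / (1 - s)) ∧ (∀ x, q x = bellman μ δ g G Y q x) ∧
      ∀ u : 𝕏 → ℝ, Measurable u → (∃ B : ℝ, ∀ y, |u y| ≤ B) →
        (∀ x, u x = bellman μ δ g G Y u x) → u = q := by
  have hs0 : 0 ≤ s := hδ.trans hδs
  have h1s : 0 < 1 - s := by linarith
  have hGK : ∀ x, |G x| ≤ K := fun x => by linarith [hK x, abs_nonneg (g x)]
  set B := K / (1 - s) with hB
  have hB0 : 0 ≤ B := by positivity
  set v : ℕ → 𝕏 → ℝ := fun k => (bellman μ δ g G Y)^[k] 0 with hv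
  have hvs : ∀ k, v (k + 1) = bellman μ δ g G Y (v k) := fun k => Function.iterate_succ_apply' _ _ _
  have hvm : ∀ k, Measurable (v k) := fun k => by
    induction k with
    | zero => exact measurable_const
    | succ k ih => rw [hvs]; exact measurable_bellman hg hG hY ih
  have hvB : ∀ k x, |v k x| ≤ B := fun k => by
    induction k with
    | zero => intro x; simpa [hv] using hB0
    | succ k ih => rw [hvs]; exact abs_bellman_le hδ hδs hs1 hK ih
  have hvd : ∀ k x, |v k x - v (k + 1) x| ≤ B * s ^ k := fun k => by
    induction k with
    | zero =>
      intro x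
      have := hvB 1 x
      simpa [hv] using this
    | succ k ih =>
      intro x
      rw [hvs (k + 1)]
      nth_rewrite 1 [hvs k]
      refine (abs_bellman_sub_le hG hY hδ hδs hGK (hvm _) (hvm _) (hvB _) (hvB _) ih x).trans
        (le_of_eq ?_)
      rw [pow_succ]; ring
  have hlim : ∀ x, ∃ y, Filter.Tendsto (fun k => v k x) Filter.atTop (nhds y) := fun x =>
    cauchySeq_tendsto_of_complete (cauchySeq_of_le_geometric s B hs1 fun k => hvd k x)
  choose q hq using hlim
  have hqm : Measurable q := measurable_of_tendsto_metrizable hvm (tendsto_pi_nhds.2 hq)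
  have hqB : ∀ y, |q y| ≤ B := fun y =>
    le_of_tendsto (hq y).abs (Filter.Eventually.of_forall fun k => hvB k y)
  have hqd : ∀ k x, |v k x - q x| ≤ B * s ^ k / (1 - s) := fun k x =>
    dist_le_of_le_geometric_of_tendsto s B hs1 (fun k => hvd k x) (hq x) k
  have hpow : ∀ D : ℝ, Filter.Tendsto (fun k : ℕ => D * s ^ k) Filter.atTop (nhds 0) := fun D => by
    simpa using (tendsto_pow_atTop_nhds_zero_of_lt_one hs0 hs1).const_mul D
  refine ⟨q, hqm, hqB, fun x => ?_, fun u hum ⟨Bu, huB⟩ hu => ?_⟩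
  · refine tendsto_nhds_unique ((hq x).comp (Filter.tendsto_add_atTop_nat 1)) ?_
    rw [tendsto_iff_dist_tendsto_zero]
    refine squeeze_zero (fun _ => dist_nonneg) (fun k => ?_) (hpow (s * B / (1 - s)))
    have h1 := abs_bellman_sub_le (μ := μ) (g := g) hG hY hδ hδs hGK (hvm k) hqm (hvB k) hqB
      (hqd k) x
    simp only [Function.comp]
    rw [hvs, Real.dist_eq]
    exact h1.trans (le_of_eq (by ring))
  · have hD : ∀ k x, |u x - q x| ≤ (Bu + B) * s ^ k + B * s ^ k / (1 - s) := by
      have h2 : ∀ k x, |u x - v k x| ≤ (Bu + B) * s ^ k := fun k => by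
        induction k with
        | zero =>
          intro x
          have := (abs_sub (u x) (v 0 x)).trans (add_le_add (huB x) (hvB 0 x))
          simpa using this
        | succ k ih =>
          intro x
          rw [hu x, hvs]
          refine (abs_bellman_sub_le hG hY hδ hδs hGK hum (hvm k) huB (hvB k) ih x).trans
            (le_of_eq ?_)
          rw [pow_succ]; ring
      exact fun k x => (abs_sub_le _ (v k x) _).trans (add_le_add (h2 k x) (hqd k x))
    ext x
    have h0 : |u x - q x| ≤ 0 := by
      refine ge_of_tendsto' (f := fun k : ℕ => (Bu + B) * s ^ k + B / (1 - s) * s ^ k)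
        (x := Filter.atTop) ?_ fun k => (hD k x).trans (le_of_eq (by ring))
      simpa using (hpow (Bu + B)).add (hpow (B / (1 - s)))
    exact sub_eq_zero.1 (abs_nonpos_iff.1 h0)

end bellman

/-! ### Cost, choice of the level and choice of the rate -/

/-- With `R + C_l + C_{l-1} ≤ 3 R (4M)^l`, the recursion is a geometric convolution with ratio `1/4`,
and `∑_{k ≥ 1} 4^{-k} = 1/3` absorbs the factor `3`. -/
lemma cost_le {M : ℕ} (hM : 1 ≤ M) {R : ℝ} (hR : 0 ≤ R) {C : ℕ → ℝ}
    (hC : ∀ n, C n ≤ ∑ l ∈ Finset.range n, (M : ℝ) ^ (n - l) *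
      (R + C l + if l = 0 then 0 else C (l - 1))) (n : ℕ) : C n ≤ R * (4 * (M : ℝ)) ^ n := by
  have hM1 : (1 : ℝ) ≤ M := by exact_mod_cast hM
  have h4 : (1 : ℝ) ≤ 4 * M := by linarith
  induction n using Nat.strong_induction_on with
  | _ n ih =>
    calc C n ≤ _ := hC n
      _ ≤ ∑ l ∈ Finset.range n, (M : ℝ) ^ (n - l) * (3 * R * (4 * (M : ℝ)) ^ l) := by
        refine Finset.sum_le_sum fun l hl => mul_le_mul_of_nonneg_left ?_ (by positivity)
        have hl := Finset.mem_range.1 hl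
        have h1 : R ≤ R * (4 * (M : ℝ)) ^ l := le_mul_of_one_le_right hR (one_le_pow₀ h4)
        have h2 := ih l hl
        split_ifs with h0
        · linarith
        · have h3 := ih (l - 1) (by omega)
          have h5 : R * (4 * (M : ℝ)) ^ (l - 1) ≤ R * (4 * (M : ℝ)) ^ l :=
            mul_le_mul_of_nonneg_left (pow_le_pow_right₀ h4 (by omega)) hR
          linarith
      _ = 3 * R * ∑ l ∈ Finset.range n, (M : ℝ) ^ (n - l) * (4 * (M : ℝ)) ^ l := by
        rw [Finset.mul_sum]
        exact Finset.sum_congr rfl fun l _ => by ring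
      _ ≤ 3 * R * (1 / 3 * (4 * (M : ℝ)) ^ n) :=
        mul_le_mul_of_nonneg_left (geom_conv_le (by positivity) (by norm_num) (by ring) n)
          (by positivity)
      _ = R * (4 * (M : ℝ)) ^ n := by ring

/-- The least level `n` with `A * ρ ^ n ≤ ε` makes any geometric cost `a ^ n` polynomial in
`1 / ε`. -/
lemma exists_level {A ρ a : ℝ} (hA : 0 < A) (hρ : 0 < ρ) (hρ1 : ρ < 1) (ha : 1 ≤ a) :
    ∃ (N : ℝ → ℕ) (c : ℝ), ∀ ε : ℝ, 0 < ε → ε ≤ 1 →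
      A * ρ ^ N ε ≤ ε ∧ a ^ N ε ≤ c * ε ^ (-c) := by
  classical
  have hex : ∀ ε : ℝ, 0 < ε → ∃ n : ℕ, A * ρ ^ n ≤ ε := fun ε hε => by
    obtain ⟨n, hn⟩ := exists_pow_lt_of_lt_one (div_pos hε hA) hρ1
    refine ⟨n, ?_⟩
    rw [lt_div_iff₀ hA] at hn
    linarith
  obtain ⟨k, hk⟩ := exists_pow_lt_of_lt_one (inv_pos.2 (by linarith : 0 < a)) hρ1
  have hk' : a * ρ ^ k ≤ 1 := by
    rw [lt_inv_comm₀ (by positivity) (by linarith)] at hk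
    rw [← le_div_iff₀ (by positivity), one_div]
    exact hk.le
  set c : ℝ := max (k : ℝ) (max ((A / ρ) ^ k) 1) with hc
  have hc1 : 1 ≤ c := (le_max_right _ _).trans (le_max_right _ _)
  refine ⟨fun ε => if h : 0 < ε then Nat.find (hex ε h) else 0, c, fun ε hε hε1 => ?_⟩
  simp only [dif_pos hε]
  refine ⟨Nat.find_spec (hex ε hε), ?_⟩
  -- Minimality of `n = j + 1` gives `ε < A * ρ ^ j`, and `a ≤ ρ ^ (-k)` turns this into a bound
  -- for `a ^ n`.
  rcases h : Nat.find (hex ε hε) with _ | j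
  · rw [pow_zero]
    have := Real.one_le_rpow_of_pos_of_le_one_of_nonpos hε hε1 (by linarith : -c ≤ 0)
    nlinarith
  · have hj := Nat.find_min (hex ε hε) (m := j) (by omega)
    push Not at hj
    have h1 : ε * ρ / A ≤ ρ ^ (j + 1) := by
      rw [div_le_iff₀ hA, pow_succ]
      nlinarith
    have h2 : a ^ (j + 1) * (ε * ρ / A) ^ k ≤ 1 := by
      calc a ^ (j + 1) * (ε * ρ / A) ^ k ≤ a ^ (j + 1) * (ρ ^ (j + 1)) ^ k := by gcongr
        _ = (a * ρ ^ k) ^ (j + 1) := by rw [mul_pow, ← pow_mul, ← pow_mul, mul_comm k]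
        _ ≤ 1 := pow_le_one₀ (by positivity) hk'
    have h3 : a ^ (j + 1) ≤ (A / ρ) ^ k * ε ^ (-(k : ℝ)) := by
      rw [Real.rpow_neg hε.le, Real.rpow_natCast]
      rw [← le_div_iff₀ (by positivity)] at h2
      refine h2.trans (le_of_eq ?_)
      rw [div_pow, div_pow, mul_pow]
      field_simp
    refine h3.trans (mul_le_mul ((le_max_left _ _).trans (le_max_right _ _)) ?_ (by positivity)
      (by linarith))
    exact Real.rpow_le_rpow_of_exponent_ge hε hε1 (neg_le_neg (le_max_left _ _))

/-- With `r = M ^ (-1/2)` and `c = r / (ρ - r)`, the last inequality amounts to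
`s + r + s * r ≤ ρ`, and the left side is below `1` under the assumption on `M`. -/
lemma exists_rate {M : ℕ} {s : ℝ} (hs0 : 0 ≤ s) (hs1 : s < 1)
    (hM : (1 + 3 * s) ^ 2 / (1 - s) ^ 2 < (M : ℝ)) :
    1 ≤ M ∧ ∃ ρ c : ℝ, 0 < ρ ∧ ρ < 1 ∧ 0 ≤ c ∧
      (√(M : ℝ))⁻¹ * c + (√(M : ℝ))⁻¹ = ρ * c ∧ s + s * (ρ + 1) * c ≤ ρ := by
  have h1s : 0 < 1 - s := by linarith
  have hM0 : (0 : ℝ) < M := lt_of_le_of_lt (by positivity) hM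
  have hq : (1 + 3 * s) / (1 - s) < √(M : ℝ) := by
    apply Real.lt_sqrt_of_sq_lt
    rwa [div_pow]
  have hr0 : 0 < √(M : ℝ) := Real.sqrt_pos.2 hM0
  refine ⟨by exact_mod_cast hM0, ?_⟩
  rw [div_lt_iff₀ h1s] at hq
  set r := (√(M : ℝ))⁻¹ with hr
  have hrp : 0 < r := inv_pos.2 hr0
  have hr1 : r * (1 + 3 * s) < 1 - s := by
    rw [hr, inv_mul_lt_iff₀ hr0]
    exact hq
  have hlt : s + r + s * r < 1 := by nlinarith [mul_nonneg hs0 hrp.le]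
  -- The midpoint, rather than `s + r + s * r` itself, keeps `ρ - r` positive when `s = 0`.
  set ρ := (1 + (s + r + s * r)) / 2 with hρ
  have hsr : 0 ≤ s * r := mul_nonneg hs0 hrp.le
  have hρ1 : ρ < 1 := by rw [hρ]; linarith
  have hρ2 : s + r + s * r ≤ ρ := by rw [hρ]; linarith
  have hρr : 0 < ρ - r := by rw [hρ]; linarith
  have hρ0 : 0 < ρ := by linarith
  refine ⟨ρ, r / (ρ - r), hρ0, hρ1, by positivity, by field_simp; ring, ?_⟩
  rw [← mul_le_mul_iff_left₀ hρr]
  have : (s + s * (ρ + 1) * (r / (ρ - r))) * (ρ - r) = ρ * (s + s * r) := by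
    field_simp; ring
  rw [this]
  nlinarith

end MLFP

/-- MLFP approximations for Bellman equations of optimal stopping problems (Corollary 4.3 of
the paper).  For a family of optimal stopping problems indexed by `d ∈ 𝔇` on standard Borel
state spaces `𝕏_d`, with uniformly bounded running rewards `g_d` and stopping rewards `G_d`,
discount factors `δ_d` with `sup_d δ_d ≤ s < 1` (encoded by an upper bound `s`) and
`M > (1 + 3s)²/(1−s)²`:
(i) each Bellman equation `Q_d(x) = g_d(x) + δ_d E[max{G_d(X_d^{0,x}), Q_d(X_d^{0,x})}]` has a
unique bounded measurable solution, and (ii) there are `N : (0,1] → ℕ` and `c ∈ ℝ` with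
`𝔠_{N_ε,d} ≤ c ℜ_d ε^{−c}` and `sup_x (E[|Q_d(x) − Q_{N_ε,d}^0(x)|²])^{1/2} ≤ ε`.
(`Θ = ⋃_n ℤ^n` is modelled by `List ℤ`, `(θ,l,i)` by `θ ++ [l,i]`, the index `0` by `[0]`.) -/
theorem stmt17
    {𝔇 : Type*} [Nonempty 𝔇]
    {Ω : Type*} [mΩ : MeasurableSpace Ω] (μ : Measure Ω) [IsProbabilityMeasure μ]
    (M : ℕ)
    {𝕏 : 𝔇 → Type*} [∀ d, MeasurableSpace (𝕏 d)] [∀ d, Nonempty (𝕏 d)]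
    [∀ d, StandardBorelSpace (𝕏 d)]
    (δ R : 𝔇 → ℝ) (hδ : ∀ d, 0 ≤ δ d) (hR : ∀ d, 0 ≤ R d)
    (g G : ∀ d, 𝕏 d → ℝ)
    (hg_meas : ∀ d, Measurable (g d)) (hG_meas : ∀ d, Measurable (G d))
    (F : 𝔇 → List ℤ → MeasurableSpace Ω)
    (hFsub : ∀ d θ, F d θ ≤ mΩ)
    (hFindep : ∀ d, ProbabilityTheory.iIndep (F d) μ)
    (X : ∀ d, List ℤ → 𝕏 d → Ω → 𝕏 d)
    (hXmeas : ∀ (d : 𝔇) (θ : List ℤ),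
      @Measurable (𝕏 d × Ω) (𝕏 d)
        ((inferInstance : MeasurableSpace (𝕏 d)).prod (F d θ)) inferInstance
        fun p => X d θ p.1 p.2)
    (hXid : ∀ (d : 𝔇) (θ η : List ℤ),
      Measure.map (fun ω => fun x : 𝕏 d => X d θ x ω) μ
        = Measure.map (fun ω => fun x : 𝕏 d => X d η x ω) μ)
    (s : ℝ) (hs : ∀ d, δ d ≤ s) (hs1 : s < 1)
    (hM : (1 + 3 * s) ^ 2 / (1 - s) ^ 2 < (M : ℝ))
    (hgG_bd : ∃ K : ℝ, ∀ (d : 𝔇) (x : 𝕏 d), |g d x| + |G d x| ≤ K)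
    (Q : ∀ d, ℕ → List ℤ → 𝕏 d → Ω → ℝ)
    (hQ : ∀ (d : 𝔇) (n : ℕ) (θ : List ℤ) (x : 𝕏 d) (ω : Ω),
      Q d n θ x ω = g d x +
        ∑ l ∈ Finset.range n, (δ d * ((M : ℝ) ^ (n - l))⁻¹) *
          ∑ i ∈ Finset.range (M ^ (n - l)),
            (max (G d (X d (θ ++ [(l : ℤ), (i : ℤ) + 1]) x ω))
                (Q d l (θ ++ [(l : ℤ), (i : ℤ) + 1])
                  (X d (θ ++ [(l : ℤ), (i : ℤ) + 1]) x ω) ω)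
              - if l = 0 then 0 else
                max (G d (X d (θ ++ [(l : ℤ), (i : ℤ) + 1]) x ω))
                  (Q d (l - 1) (θ ++ [-(l : ℤ), (i : ℤ) + 1])
                    (X d (θ ++ [(l : ℤ), (i : ℤ) + 1]) x ω) ω)))
    (C : ℕ → 𝔇 → ℝ) (hC_nonneg : ∀ n d, 0 ≤ C n d)
    (hC_rec : ∀ (n : ℕ) (d : 𝔇),
      C n d ≤ ∑ l ∈ Finset.range n, (M : ℝ) ^ (n - l) *
        (R d + C l d + if l = 0 then 0 else C (l - 1) d)) :
    ∃ q : ∀ d : 𝔇, 𝕏 d → ℝ,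
      (∀ d : 𝔇,
        ((Measurable (q d) ∧ (∃ K : ℝ, ∀ y, |q d y| ≤ K)) ∧
          ∀ x : 𝕏 d,
            q d x = g d x + δ d * ∫ ω, max (G d (X d ([0]) x ω)) (q d (X d ([0]) x ω)) ∂μ) ∧
        ∀ u : 𝕏 d → ℝ,
          ((Measurable u ∧ (∃ K : ℝ, ∀ y, |u y| ≤ K)) ∧
            ∀ x : 𝕏 d,
              u x = g d x + δ d * ∫ ω, max (G d (X d ([0]) x ω)) (u (X d ([0]) x ω)) ∂μ) →
            u = q d) ∧
      ∃ (N : ℝ → ℕ) (c : ℝ), ∀ (d : 𝔇) (ε : ℝ), 0 < ε → ε ≤ 1 →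
        C (N ε) d ≤ c * R d * ε ^ (-c) ∧
          ∀ x : 𝕏 d,
            (∫⁻ ω, ENNReal.ofReal (|q d x - Q d (N ε) ([0]) x ω| ^ 2) ∂μ)
              ≤ ENNReal.ofReal (ε ^ 2) := by
  classical
  obtain ⟨K, hK⟩ := hgG_bd
  obtain ⟨d₀⟩ := ‹Nonempty 𝔇›
  have hs0 : 0 ≤ s := (hδ d₀).trans (hs d₀)
  have h1s : 0 < 1 - s := by linarith
  have hK0 : 0 ≤ K := by
    obtain ⟨x₀⟩ := (inferInstance : Nonempty (𝕏 d₀))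
    exact (add_nonneg (abs_nonneg _) (abs_nonneg _)).trans (hK d₀ x₀)
  obtain ⟨hM1, ρ, c, hρ, hρ1, hc, hrc, hsρ⟩ := MLFP.exists_rate hs0 hs1 hM
  have hXm : ∀ d θ x, Measurable (X d θ x) := fun d θ x =>
    ((hXmeas d θ).mono (MLFP.IsScheme.prod_mono (hFsub d θ)) le_rfl).comp measurable_prodMk_left
  have hscheme : ∀ d, MLFP.IsScheme μ M (δ d) (g d) (G d) (F d) (X d) (Q d) := fun d =>
    { g_meas := hg_meas d
      G_meas := hG_meas d
      F_le := hFsub d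
      indep := hFindep d
      X_meas := hXmeas d
      X_map := fun θ η x => by
        have h := congrArg (Measure.map (fun f : 𝕏 d → 𝕏 d => f x)) (hXid d θ η)
        rwa [Measure.map_map (measurable_pi_apply x) (measurable_pi_lambda _ (hXm d θ)),
          Measure.map_map (measurable_pi_apply x) (measurable_pi_lambda _ (hXm d η))] at h
      Q_eq := hQ d }
  choose q hqm hqB hqfix hquniq using fun d => MLFP.exists_unique_bellman (μ := μ) (Y := X d [0])
    (hg_meas d) (hG_meas d)
    ((hXmeas d [0]).mono (MLFP.IsScheme.prod_mono (hFsub d [0])) le_rfl)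
    (hδ d) (hs d) hs1 (hK d) hK0
  set B := K / (1 - s) with hB
  have hB0 : 0 ≤ B := div_nonneg hK0 h1s.le
  have hgK : ∀ d x, |g d x| ≤ K := fun d x => by linarith [hK d x, abs_nonneg (G d x)]
  have hGK : ∀ d x, |G d x| ≤ K := fun d x => by linarith [hK d x, abs_nonneg (g d x)]
  set A := 1 + K + B with hA
  have hA0 : 0 < A := by positivity
  have herr : ∀ d n x, eLpNorm (fun ω => Q d n [0] x ω - q d x) 2 μ ≤ ENNReal.ofReal (A * ρ ^ n) := by
    intro d n x
    refine (hscheme d).eLpNorm_error_le (c := c) (by omega) (hqm d) (hδ d) (hqfix d) hA0.le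
      (fun z => ?_) (fun z => ?_) (K := max K B) (fun z => ?_) rfl hρ hc hrc ?_ n [0] x
    · have := abs_sub (g d z) (q d z)
      linarith [hgK d z, hqB d z]
    · have := abs_max_le_max_abs_abs.trans (max_le (hGK d z) (hgK d z))
      linarith
    · exact abs_max_le_max_abs_abs.trans (max_le_max (hGK d z) (hqB d z))
    · have h1 : 0 ≤ 1 + (ρ + 1) * c := by positivity
      nlinarith [mul_le_mul_of_nonneg_right (hs d) h1]
  have h4M : (1 : ℝ) ≤ 4 * M := by
    have : (1 : ℝ) ≤ M := by exact_mod_cast hM1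
    linarith
  obtain ⟨N, c', hN⟩ := MLFP.exists_level hA0 hρ hρ1 h4M
  refine ⟨q, fun d => ⟨⟨⟨hqm d, B, hqB d⟩, hqfix d⟩, fun u hu => hquniq d u hu.1.1 hu.1.2 hu.2⟩,
    N, c', fun d ε hε hε1 => ⟨?_, fun x => ?_⟩⟩
  · calc C (N ε) d ≤ R d * (4 * (M : ℝ)) ^ N ε :=
          MLFP.cost_le hM1 (hR d) (C := fun n => C n d) (fun n => hC_rec n d) (N ε)
      _ ≤ R d * (c' * ε ^ (-c')) := mul_le_mul_of_nonneg_left (hN ε hε hε1).2 (hR d)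
      _ = c' * R d * ε ^ (-c') := by ring
  · have h1 := MLFP.eLpNorm_two_le_iff.1
      ((herr d (N ε) x).trans (ENNReal.ofReal_le_ofReal (hN ε hε hε1).1))
    rw [ENNReal.ofReal_pow hε.le]
    refine le_trans (le_of_eq (lintegral_congr fun ω => ?_)) h1
    rw [ENNReal.ofReal_pow (abs_nonneg _), Real.enorm_eq_ofReal_abs, abs_sub_comm]
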